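/- arXiv:1604.02597 — 7 statements merged into one kernel-verified Lean document; each statement's English description precedes it below -/
import Mathlib

section
/- For every k ≥ 1, b^(k(k+1)/2) < h k < b^(k(k+1)/2 + 1). -/
open MeasureTheory Filter Topology
open scoped ENNReal

/-- `m`-fold concatenation of a word. -/
def wordPow (w : List ℕ) (m : ℕ) : List ℕ := (List.replicate m w).flatten

/-- The words of the generalized del Junco–Rudolph construction:
`B 0 = [0]`, `B (k+1) = (B k)^(a·b^k) ++ [1] ++ (B k)^((b-a)·b^k)`. -/
def Bword (b a : ℕ) : ℕ → List ℕ
  | 0 => [0]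
  | k + 1 => wordPow (Bword b a k) (a * b ^ k) ++ [1] ++ wordPow (Bword b a k) ((b - a) * b ^ k)

/-- The height sequence: `h 0 = 1`, `h (k+1) = b^(k+1) * h k + 1`. -/
def hseq (b : ℕ) : ℕ → ℕ
  | 0 => 1
  | k + 1 => b ^ (k + 1) * hseq b k + 1

/-- for every `k ≥ 1`, `b^(k(k+1)/2) < h k < b^(k(k+1)/2 + 1)`. -/
theorem hseq_bounds (b : ℕ) (hb : 2 ≤ b) (k : ℕ) (hk : 1 ≤ k) :
    b ^ (k * (k + 1) / 2) < hseq b k ∧ hseq b k < b ^ (k * (k + 1) / 2 + 1) := by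
  induction k, hk using Nat.le_induction with
  | base =>
    simp only [hseq]
    norm_num
    nlinarith
  | succ n hn ih =>
    obtain ⟨h1, h2⟩ := ih
    have he : (n + 1) * (n + 1 + 1) / 2 = (n + 1) + n * (n + 1) / 2 := by
      have : (n + 1) * (n + 1 + 1) = n * (n + 1) + (n + 1) * 2 := by ring
      rw [this, Nat.add_mul_div_right _ _ (by norm_num)]
      ring
    have hp : 1 < b ^ (n + 1) := Nat.one_lt_pow (by omega) (by omega)
    rw [he, add_assoc (n + 1), pow_add b (n + 1), pow_add b (n + 1)]
    simp only [hseq]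
    constructor
    · have := Nat.mul_le_mul_left (b ^ (n + 1)) h1.le
      omega
    · have := Nat.mul_le_mul_left (b ^ (n + 1)) (Nat.succ_le_of_lt h2)
      rw [Nat.mul_succ] at this
      omega
end

section
/- Let k ≥ 2 and let x ∈ X. If for some m ∈ ℤ the block x_m x_{m+1} … x_{m+2·h k} equals the word B k ++ [1] ++ B k, then the block x_{m−h k} … x_{m−1} equals B k and the block x_{m+2·h k+1} … x_{m+3·h k} equals B k. -/
open MeasureTheory Filter Topology
open scoped ENNReal

/-- The word `w` occurs in the word `v` at position `p` (0-based). -/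
def OccursAt (w v : List ℕ) (p : ℕ) : Prop :=
  p + w.length ≤ v.length ∧ (v.drop p).take w.length = w

/-- The block of `x` of length `w.length` starting at index `m` equals the word `w`. -/
def BlockEq (x : ℤ → ℕ) (m : ℤ) (w : List ℕ) : Prop :=
  ∀ i : ℕ, i < w.length → x (m + i) = w.getD i 0

/-- Membership in the subshift `X`: every finite block of `x` occurs as a consecutive
subword of some `B k`. -/
def InX (b a : ℕ) (x : ℤ → ℕ) : Prop :=
  ∀ (m : ℤ) (l : ℕ), ∃ k p, OccursAt (List.ofFn fun i : Fin l => x (m + (i : ℕ))) (Bword b a k) p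

theorem fb_append (x : ℤ → ℕ) (p : ℤ) (u w : List ℕ) :
    BlockEq x p (u ++ w) ↔ BlockEq x p u ∧ BlockEq x (p + u.length) w := by
  unfold BlockEq
  constructor
  · intro h
    refine ⟨fun i hi => ?_, fun i hi => ?_⟩
    · have := h i (by rw [List.length_append]; omega)
      rwa [List.getD_append _ _ _ _ hi] at this
    · have := h (u.length + i) (by rw [List.length_append]; omega)
      rw [List.getD_append_right _ _ _ _ (by omega)] at this
      rw [Nat.add_sub_cancel_left] at this
      rw [← this]; push_cast; congr 1; ring
  · rintro ⟨h1, h2⟩ i hi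
    rw [List.length_append] at hi
    by_cases hu : i < u.length
    · rw [List.getD_append _ _ _ _ hu]; exact h1 i hu
    · rw [List.getD_append_right _ _ _ _ (by omega), ← h2 _ (by omega)]
      congr 1; omega

theorem fb_one (x : ℤ → ℕ) (p : ℤ) : BlockEq x p [1] ↔ x p = 1 := by
  unfold BlockEq
  constructor
  · intro h; simpa using h 0 (by simp)
  · intro h i hi
    have : i = 0 := by simpa using hi
    subst this; simpa using h

theorem fb_pow (x : ℤ → ℕ) (w : List ℕ) (m : ℕ) : ∀ p : ℤ,
    BlockEq x p (wordPow w m) ↔ ∀ j : ℕ, j < m → BlockEq x (p + j * w.length) w := by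
  induction m with
  | zero => intro p; simp [wordPow, BlockEq]
  | succ m ih =>
    intro p
    have : wordPow w (m+1) = w ++ wordPow w m := by simp [wordPow, List.replicate_succ]
    rw [this, fb_append, ih]
    constructor
    · rintro ⟨h1, h2⟩ j hj
      rcases j with _ | j
      · simpa using h1
      · have := h2 j (by omega)
        convert this using 1
        push_cast; ring
    · intro h
      refine ⟨by simpa using h 0 (by omega), fun j hj => ?_⟩
      have := h (j+1) (by omega)
      convert this using 1
      push_cast; ring

theorem fb_h (b a k : ℕ) (ha : a ≤ b - 1) :
    hseq b (k+1) = a * b^k * hseq b k + 1 + (b-a) * b^k * hseq b k := by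
  obtain ⟨c, rfl⟩ : ∃ c, b = a + c := ⟨b - a, by omega⟩
  rw [Nat.add_sub_cancel_left, hseq]; ring

theorem fb_hpos (b k : ℕ) : 1 ≤ hseq b k := by
  cases k <;> simp [hseq]

theorem fb_len (b a : ℕ) (ha : a ≤ b - 1) (k : ℕ) : (Bword b a k).length = hseq b k := by
  induction k with
  | zero => rfl
  | succ k ih =>
    rw [fb_h b a k ha]
    simp [Bword, wordPow, ih]; ring

theorem fb_block (b a : ℕ) (ha : a ≤ b - 1) (k : ℕ) (x : ℤ → ℕ) (p : ℤ) :
    BlockEq x p (Bword b a (k+1)) ↔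
      (∀ j : ℕ, j < a * b^k → BlockEq x (p + j * hseq b k) (Bword b a k)) ∧
      x (p + (a * b^k : ℕ) * hseq b k) = 1 ∧
      (∀ j : ℕ, j < (b-a) * b^k →
        BlockEq x (p + (a * b^k : ℕ) * hseq b k + 1 + j * hseq b k) (Bword b a k)) := by
  have hl : (wordPow (Bword b a k) (a * b^k)).length = a * b^k * hseq b k := by
    simp [wordPow, fb_len b a ha]
  rw [Bword, fb_append, fb_append, fb_one, fb_pow, fb_pow, fb_len b a ha, List.length_append, hl,
    and_assoc]
  have e : p + ((a * b^k * hseq b k + [1].length : ℕ) : ℤ) = p + (a * b^k : ℕ) * hseq b k + 1 := by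
    simp; ring
  rw [e]
  have e : p + ((a * b^k * hseq b k : ℕ) : ℤ) = p + (a * b^k : ℕ) * hseq b k := by
    simp
  rw [e]

theorem fb_zero (b a : ℕ) (hb : 2 ≤ b) (ha1 : 1 ≤ a) (ha : a ≤ b - 1) (x : ℤ → ℕ) (p : ℤ) (k : ℕ) :
    BlockEq x p (Bword b a k) → x p = 0 := by
  induction k with
  | zero => intro h; simpa [Bword] using h 0 (by simp [Bword])
  | succ k ih =>
    intro h
    rw [fb_block b a ha] at h
    apply ih
    simpa using h.1 0 (by positivity)

/-- the word `B n` extended by the symbol 2 -/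
def fbV (b a n : ℕ) (i : ℤ) : ℕ := if 0 ≤ i then (Bword b a n).getD i.toNat 2 else 2

/-- expected starts of level `k` blocks in `B n` -/
inductive FbSt (b a n : ℕ) : ℕ → ℤ → Prop
  | top : FbSt b a n n 0
  | left (k : ℕ) (p : ℤ) (j : ℕ) : FbSt b a n (k+1) p → j < a * b^k →
      FbSt b a n k (p + j * hseq b k)
  | right (k : ℕ) (p : ℤ) (j : ℕ) : FbSt b a n (k+1) p → j < (b-a) * b^k →
      FbSt b a n k (p + (a * b^k : ℕ) * hseq b k + 1 + j * hseq b k)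

theorem fb_st_block (b a n : ℕ) (ha : a ≤ b - 1) (k : ℕ) (p : ℤ) (h : FbSt b a n k p) :
    BlockEq (fbV b a n) p (Bword b a k) := by
  induction h with
  | top =>
    intro i hi
    simp [fbV, hi]
  | left k p j h hj ih => exact ((fb_block b a ha k _ p).1 ih).1 j hj
  | right k p j h hj ih => exact ((fb_block b a ha k _ p).1 ih).2.2 j hj

theorem fb_end (b a n : ℕ) (ha : a ≤ b - 1) : fbV b a n (hseq b n) = 2 := by
  simp [fbV, ← fb_len b a ha]

theorem fb_next (b a n : ℕ) (hb : 2 ≤ b) (ha1 : 1 ≤ a) (ha : a ≤ b - 1) (k : ℕ) (p : ℤ)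
    (h : FbSt b a n k p) :
    fbV b a n (p + hseq b k) = 2 ∨ FbSt b a n k (p + hseq b k) ∨
      (fbV b a n (p + hseq b k) = 1 ∧ FbSt b a n k (p + hseq b k + 1)) := by
  induction h with
  | top => left; simpa using fb_end b a n ha
  | left k p j h hj ih =>
    right
    by_cases hj' : j + 1 < a * b^k
    · left
      convert FbSt.left k p (j+1) h hj' using 1
      push_cast; ring
    · right
      have hj2 : j + 1 = a * b^k := by omega
      have e : p + (j:ℤ) * hseq b k + hseq b k = p + (a * b^k : ℕ) * hseq b k := by
        rw [← hj2]; push_cast; ring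
      rw [e]
      refine ⟨((fb_block b a ha k _ p).1 (fb_st_block b a n ha _ _ h)).2.1, ?_⟩
      have := FbSt.right k p 0 h (by have : 0 < b - a := by omega
                                     positivity)
      simpa using this
  | right k p j h hj ih =>
    by_cases hj' : j + 1 < (b-a) * b^k
    · right; left
      convert FbSt.right k p (j+1) h hj' using 1
      push_cast; ring
    · have hj2 : j + 1 = (b-a) * b^k := by omega
      have e : p + (a * b^k : ℕ) * hseq b k + 1 + (j:ℤ) * hseq b k + hseq b k
          = p + hseq b (k+1) := by
        rw [fb_h b a k ha, ← hj2]; push_cast; ring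
      rw [e]
      have key : ∀ q, FbSt b a n (k+1) q → FbSt b a n k q := by
        intro q hq
        simpa using FbSt.left k q 0 hq (by positivity)
      rcases ih with h1 | h1 | ⟨h1, h2⟩
      · exact Or.inl h1
      · exact Or.inr (Or.inl (key _ h1))
      · exact Or.inr (Or.inr ⟨h1, key _ h2⟩)

/-- the position `S` is an expected spacer at level `k` -/
def FbSp (b a n k : ℕ) (S : ℤ) : Prop := FbSt b a n k (S - hseq b k) ∧ fbV b a n S = 1

theorem fb_sp_next (b a n : ℕ) (hb : 2 ≤ b) (ha1 : 1 ≤ a) (ha : a ≤ b - 1) (k : ℕ) (S : ℤ)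
    (h : FbSp b a n k S) : FbSt b a n k (S + 1) := by
  obtain ⟨h1, h2⟩ := h
  have := fb_next b a n hb ha1 ha k _ h1
  rw [sub_add_cancel] at this
  rcases this with h3 | h3 | h3
  · omega
  · have := fb_zero b a hb ha1 ha _ _ _ (fb_st_block b a n ha _ _ h3)
    omega
  · exact h3.2

theorem fb_dich (b a n : ℕ) (hb : 2 ≤ b) (ha1 : 1 ≤ a) (ha : a ≤ b - 1) (k : ℕ) (S : ℤ)
    (h : FbSp b a n k S) :
    FbSt b a n (k+1) (S - (a * b^k : ℕ) * hseq b k) ∨ FbSp b a n (k+1) S := by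
  obtain ⟨h1, h2⟩ := h
  generalize hp : S - (hseq b k : ℤ) = p at h1
  cases h1 with
  | top =>
    have : S = hseq b n := by omega
    rw [this, fb_end b a n ha] at h2
    omega
  | left _ p j h hj =>
    left
    by_cases hj' : j + 1 < a * b^k
    · have := fb_zero b a hb ha1 ha _ _ _ (fb_st_block b a n ha _ _ (FbSt.left k p (j+1) h hj'))
      have e : p + ((j+1 : ℕ):ℤ) * hseq b k = S := by push_cast; linarith
      rw [e] at this; omega
    · have hj2 : j + 1 = a * b^k := by omega
      convert h using 1
      rw [← hj2]; push_cast; linarith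
  | right _ p j h hj =>
    right
    by_cases hj' : j + 1 < (b-a) * b^k
    · have := fb_zero b a hb ha1 ha _ _ _ (fb_st_block b a n ha _ _ (FbSt.right k p (j+1) h hj'))
      have e : p + (a * b^k : ℕ) * hseq b k + 1 + ((j+1 : ℕ):ℤ) * hseq b k = S := by
        push_cast at hp ⊢; linarith
      rw [e] at this; omega
    · have hj2 : j + 1 = (b-a) * b^k := by omega
      refine ⟨?_, h2⟩
      convert h using 1
      rw [fb_h b a k ha, ← hj2]; push_cast at hp ⊢; linarith

theorem fb_two (b c k : ℕ) (hb : 2 ≤ b) (hc : 1 ≤ c) (hk : 1 ≤ k) : 2 ≤ c * b^k := by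
  calc 2 ≤ b := hb
    _ = b^1 := (pow_one b).symm
    _ ≤ b^k := Nat.pow_le_pow_right (by omega) hk
    _ ≤ c * b^k := Nat.le_mul_of_pos_left _ hc

theorem fb_flank (b a n : ℕ) (hb : 2 ≤ b) (ha1 : 1 ≤ a) (ha : a ≤ b - 1) (k : ℕ) (hk : 1 ≤ k)
    (S : ℤ) (h : FbSp b a n k S) :
    BlockEq (fbV b a n) (S - 2 * hseq b k) (Bword b a k) ∧
    BlockEq (fbV b a n) (S + 1 + hseq b k) (Bword b a k) := by
  have hN := fb_two b a k hb ha1 hk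
  have hM := fb_two b (b-a) k hb (by omega) hk
  have hh := fb_h b a k ha
  rcases fb_dich b a n hb ha1 ha k S h with h1 | h1
  · obtain ⟨A, B, C⟩ := (fb_block b a ha k _ _).1 (fb_st_block b a n ha _ _ h1)
    constructor
    · convert A (a * b^k - 2) (by omega) using 1
      push_cast [Nat.cast_sub hN]; ring
    · convert C 1 (by omega) using 1
      push_cast; ring
  · have h2 := fb_sp_next b a n hb ha1 ha _ _ h1
    obtain ⟨A, B, C⟩ := (fb_block b a ha k _ _).1 (fb_st_block b a n ha _ _ h1.1)
    obtain ⟨A', B', C'⟩ := (fb_block b a ha k _ _).1 (fb_st_block b a n ha _ _ h2)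
    constructor
    · convert C ((b-a) * b^k - 2) (by omega) using 1
      rw [hh, Nat.cast_sub hM]; push_cast; ring
    · convert A' 1 (by omega) using 1
      push_cast; ring

theorem fb_cover (b a n : ℕ) (ha : a ≤ b - 1) (q : ℤ)
    (hq : fbV b a n q = 0) (d : ℕ) : ∀ k, k + d = n →
    ∃ p, FbSt b a n k p ∧ p ≤ q ∧ q < p + hseq b k := by
  induction d with
  | zero =>
    intro k hk
    obtain rfl : k = n := by omega
    refine ⟨0, FbSt.top, ?_⟩
    unfold fbV at hq
    split_ifs at hq with h0
    refine ⟨h0, ?_⟩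
    by_contra hc
    rw [List.getD_eq_default _ _ (by rw [fb_len b a ha]; omega)] at hq
    omega
  | succ d ih =>
    intro k hk
    obtain ⟨p, hp, h1, h2⟩ := ih (k+1) (by omega)
    have hpos : (1:ℤ) ≤ hseq b k := by exact_mod_cast fb_hpos b k
    have key : ∀ r : ℤ, ∀ N : ℕ, r ≤ q → q < r + (N:ℤ) * hseq b k →
        ∃ j : ℕ, j < N ∧ r + j * hseq b k ≤ q ∧ q < r + j * hseq b k + hseq b k := by
      intro r N h1 h2
      induction N with
      | zero => simp at h2; omega
      | succ N ih =>
        by_cases hc : q < r + (N:ℤ) * hseq b k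
        · obtain ⟨j, hj, hj'⟩ := ih hc
          exact ⟨j, by omega, hj'⟩
        · refine ⟨N, by omega, by omega, ?_⟩
          push_cast at h2; linarith
    by_cases hA : q < p + (a * b^k : ℕ) * hseq b k
    · obtain ⟨j, hj, hj'⟩ := key p _ h1 hA
      exact ⟨_, FbSt.left k p j hp hj, hj'⟩
    · have hB : q ≠ p + (a * b^k : ℕ) * hseq b k := by
        intro e
        have := ((fb_block b a ha k _ _).1 (fb_st_block b a n ha _ _ hp)).2.1
        rw [← e] at this; omega
      obtain ⟨j, hj, hj'⟩ := key (p + (a * b^k : ℕ) * hseq b k + 1) ((b-a) * b^k) (by omega) (by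
        rw [fb_h b a k ha] at h2
        push_cast at h2 ⊢; linarith)
      exact ⟨_, FbSt.right k p j hp hj, hj'⟩

theorem fb_main (b a n : ℕ) (hb : 2 ≤ b) (ha1 : 1 ≤ a) (ha : a ≤ b - 1) (k : ℕ) : ∀ q : ℤ,
    BlockEq (fbV b a n) q (Bword b a k) → fbV b a n (q + hseq b k) = 1 →
    BlockEq (fbV b a n) (q + hseq b k + 1) (Bword b a k) → FbSp b a n k (q + hseq b k) := by
  induction k with
  | zero =>
    intro q h1 h2 h3
    refine ⟨?_, h2⟩
    rw [add_sub_cancel_right]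
    obtain ⟨p, hp, h4, h5⟩ := fb_cover b a n ha q (fb_zero b a hb ha1 ha _ _ _ h1) n 0 (by omega)
    have : q = p := by simp [hseq] at h5; omega
    rwa [this]
  | succ k ih =>
    intro q h1 h2 h3
    refine ⟨?_, h2⟩
    rw [add_sub_cancel_right]
    have hN : 1 ≤ a * b^k := by apply Nat.one_le_iff_ne_zero.2; positivity
    have hM : 1 ≤ (b-a) * b^k := by
      have : 0 < b - a := by omega
      apply Nat.one_le_iff_ne_zero.2; positivity
    have hh : (hseq b (k+1) : ℤ) = _ := congrArg (Nat.cast : ℕ → ℤ) (fb_h b a k ha)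
    obtain ⟨A, B, C⟩ := (fb_block b a ha k _ _).1 h1
    obtain ⟨A', B', C'⟩ := (fb_block b a ha k _ _).1 h3
    have e : q + ((a * b^k - 1 : ℕ) : ℤ) * hseq b k + hseq b k
        = q + (a * b^k : ℕ) * hseq b k := by
      rw [Nat.cast_sub hN]; push_cast; ring
    have hS := ih (q + ((a * b^k - 1 : ℕ) : ℤ) * hseq b k) (A _ (by omega)) (by rw [e]; exact B)
      (by rw [e]; simpa using C 0 (by omega))
    rw [e] at hS
    rcases fb_dich b a n hb ha1 ha k _ hS with h4 | h4
    · simpa using h4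
    · exfalso
      have h5 := fb_st_block b a n ha _ _ (fb_sp_next b a n hb ha1 ha _ _ h4)
      have h6 := fb_zero b a hb ha1 ha _ _ _ (fb_flank b a n hb ha1 ha (k+1) (by omega) _ h4).2
      obtain ⟨D, E, F⟩ := (fb_block b a ha k _ _).1 h5
      rcases lt_trichotomy ((b-a) * b^k) (a * b^k) with hlt | heq | hlt
      · have := fb_zero b a hb ha1 ha _ _ _ (D _ hlt)
        have e2 : q + (a * b^k : ℕ) * hseq b k + 1 + ((b-a) * b^k : ℕ) * hseq b k
          = q + hseq b (k+1) := by rw [hh]; push_cast; ring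
        rw [e2] at this; omega
      · have e2 : q + (a * b^k : ℕ) * hseq b k + 1 + hseq b (k+1) =
            q + hseq b (k+1) + 1 + (a * b^k : ℕ) * hseq b k := by ring
        rw [e2] at h6; omega
      · have := fb_zero b a hb ha1 ha _ _ _ (C _ hlt)
        omega


/-- if `x ∈ X` contains the block `B k 1 B k` starting at `m` (`k ≥ 2`), then
the blocks of length `h k` immediately to the left and to the right are both `B k`. -/
theorem flank_blocks (b a : ℕ) (hb : 2 ≤ b) (ha1 : 1 ≤ a) (ha2 : a ≤ b - 1)
    (k : ℕ) (hk : 2 ≤ k) (x : ℤ → ℕ) (hx : InX b a x) (m : ℤ)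
    (h : BlockEq x m (Bword b a k ++ [1] ++ Bword b a k)) :
    BlockEq x (m - (hseq b k : ℤ)) (Bword b a k) ∧
    BlockEq x (m + 2 * (hseq b k : ℤ) + 1) (Bword b a k) := by
  have hL := fb_len b a ha2 k
  rw [fb_append, fb_append, fb_one, List.length_append, hL] at h
  obtain ⟨⟨h1, h2⟩, h3⟩ := h
  obtain ⟨n, p, hp, ho⟩ := hx (m - hseq b k) (4 * hseq b k + 1)
  rw [List.length_ofFn] at hp ho
  have key : ∀ i : ℕ, i < 4 * hseq b k + 1 →
      x (m - hseq b k + i) = fbV b a n (p + i) := by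
    intro i hi
    have h4 := congrArg (fun l => l.getD i 2) ho.symm
    rw [List.getD_eq_getElem _ _ (by rw [List.length_ofFn]; exact hi), List.getElem_ofFn] at h4
    rw [h4]
    have e : ((p:ℤ) + i).toNat = p + i := by omega
    unfold fbV
    rw [if_pos (by omega), e]
    simp [List.getD_eq_getElem?_getD, List.getElem?_take, hi, List.getElem?_drop]
  have tr : ∀ c : ℤ, 0 ≤ c → c ≤ 3 * hseq b k + 1 →
      (BlockEq x (m - hseq b k + c) (Bword b a k) ↔
        BlockEq (fbV b a n) (p + c) (Bword b a k)) := by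
    intro c hc0 hc
    unfold BlockEq
    rw [hL]
    refine forall_congr' fun i => forall_congr' fun hi => ?_
    have := key (c.toNat + i) (by omega)
    have e1 : m - (hseq b k : ℤ) + ((c.toNat + i : ℕ) : ℤ) = m - hseq b k + c + i := by
      push_cast; omega
    have e2 : (p : ℤ) + ((c.toNat + i : ℕ) : ℤ) = p + c + i := by
      push_cast; omega
    rw [e1, e2] at this
    rw [this]
  have g1 := (tr (hseq b k) (by omega) (by omega)).1 (by rwa [sub_add_cancel])
  have g2 := key (2 * hseq b k) (by omega)
  have e3 : m - (hseq b k : ℤ) + ((2 * hseq b k : ℕ) : ℤ) = m + hseq b k := by push_cast; ring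
  rw [e3, h2] at g2
  have g3 := (tr (2 * hseq b k + 1) (by omega) (by omega)).1 (by
    convert h3 using 1
    push_cast [List.length_singleton]; ring)
  have hS := fb_main b a n hb ha1 ha2 k _ g1 (by
    rw [g2]; congr 1; push_cast; ring) (by convert g3 using 1; ring)
  obtain ⟨f1, f2⟩ := fb_flank b a n hb ha1 ha2 k (by omega) _ hS
  constructor
  · have := (tr 0 (by omega) (by omega)).2 (by convert f1 using 1; ring)
    simpa using this
  · have := (tr (3 * hseq b k + 1) (by omega) (by omega)).2 (by convert f2 using 1; ring)
    convert this using 1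
    ring
end

section
/- The subshift (X, σ) is minimal: for every x ∈ X, the two-sided orbit { σ^n x : n ∈ ℤ } is dense in X (equivalently, X has no nonempty proper closed σ-invariant subset). -/
open MeasureTheory Filter Topology
open scoped ENNReal

/-- The left shift `(σ x) n = x (n+1)` on `{0,1}^ℤ`. -/
def shiftMap (x : ℤ → ℕ) : ℤ → ℕ := fun n => x (n + 1)

inductive GoodW (W : List ℕ) : List ℕ → Prop
  | base : GoodW W W
  | app (v : List ℕ) : GoodW W v → GoodW W (W ++ v)
  | sp (v : List ℕ) : GoodW W v → GoodW W (W ++ ([1] ++ v))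

theorem GoodW.append {W u v : List ℕ} (hu : GoodW W u) (hv : GoodW W v) : GoodW W (u ++ v) := by
  induction hu with
  | base => exact .app _ hv
  | app u _ ih => rw [List.append_assoc]; exact .app _ ih
  | sp u _ ih => rw [List.append_assoc, List.append_assoc]; exact .sp _ ih

theorem GoodW.append1 {W u v : List ℕ} (hu : GoodW W u) (hv : GoodW W v) :
    GoodW W (u ++ [1] ++ v) := by
  rw [List.append_assoc]
  induction hu with
  | base => exact .sp _ hv
  | app u _ ih => rw [List.append_assoc]; exact .app _ ih
  | sp u _ ih => rw [List.append_assoc, List.append_assoc]; exact .sp _ ih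

theorem GoodW.pow {W u : List ℕ} (hu : GoodW W u) (m : ℕ) (hm : 1 ≤ m) :
    GoodW W (wordPow u m) := by
  induction m, hm using Nat.le_induction with
  | base => simpa [wordPow] using hu
  | succ m _ ih =>
    have : wordPow u (m+1) = u ++ wordPow u m := by simp [wordPow, List.replicate_succ]
    rw [this]; exact hu.append ih

theorem GoodW.prefix {W v : List ℕ} (h : GoodW W v) : W <+: v := by
  cases h with
  | base => exact List.prefix_rfl
  | app v _ => exact List.prefix_append _ _
  | sp v _ => exact List.prefix_append _ _

theorem GoodW.find {W v : List ℕ} (hW : 1 ≤ W.length) (h : GoodW W v) :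
    ∀ p, p + 2 * W.length ≤ v.length →
      ∃ q, p ≤ q ∧ q ≤ p + W.length ∧ W <+: v.drop q := by
  induction h with
  | base => intro p hp; omega
  | app v hv ih =>
    intro p hp
    rw [List.length_append] at hp
    rcases Nat.eq_zero_or_pos p with rfl | h0
    · exact ⟨0, le_rfl, by omega, by simp⟩
    rcases lt_or_ge p W.length with h1 | h1
    · refine ⟨W.length, by omega, by omega, ?_⟩
      simpa using hv.prefix
    · obtain ⟨q, h2, h3, h4⟩ := ih (p - W.length) (by omega)
      refine ⟨W.length + q, by omega, by omega, ?_⟩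
      rwa [← List.drop_drop, List.drop_left]
  | sp v hv ih =>
    intro p hp
    rw [List.length_append, List.length_append, List.length_singleton] at hp
    rcases Nat.eq_zero_or_pos p with rfl | h0
    · exact ⟨0, le_rfl, by omega, by simp⟩
    rcases lt_or_ge p (W.length + 1) with h1 | h1
    · refine ⟨W.length + 1, by omega, by omega, ?_⟩
      rw [← List.drop_drop, List.drop_left]
      simpa using hv.prefix
    · obtain ⟨q, h2, h3, h4⟩ := ih (p - (W.length + 1)) (by omega)
      refine ⟨W.length + (1 + q), by omega, by omega, ?_⟩
      rw [← List.drop_drop, List.drop_left, ← List.drop_drop]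
      simpa using h4

theorem Bword_good (b a : ℕ) (hb : 2 ≤ b) (ha1 : 1 ≤ a) (ha2 : a ≤ b - 1) (k n : ℕ) :
    GoodW (Bword b a k) (Bword b a (k + n)) := by
  induction n with
  | zero => exact .base
  | succ n ih =>
    have hp : 1 ≤ b ^ (k + n) := Nat.one_le_pow _ _ (by omega)
    have h2 : 1 ≤ b - a := by omega
    rw [← Nat.add_assoc, Bword]
    exact (ih.pow _ (Nat.mul_pos ha1 hp)).append1 (ih.pow _ (Nat.mul_pos h2 hp))

theorem Bword_len (b a k : ℕ) : 1 ≤ (Bword b a k).length := by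
  cases k with
  | zero => simp [Bword]
  | succ k => simp [Bword]; omega

theorem occ_get {x : ℤ → ℕ} {m : ℤ} {l p : ℕ} {v : List ℕ}
    (h : OccursAt (List.ofFn fun i : Fin l => x (m + (i : ℕ))) v p) :
    p + l ≤ v.length ∧ ∀ i < l, v[p + i]? = some (x (m + i)) := by
  obtain ⟨h1, h2⟩ := h
  rw [List.length_ofFn] at h1 h2
  refine ⟨h1, fun i hi => ?_⟩
  have := congrArg (fun t => t[i]?) h2
  simpa [List.getElem?_take, hi, List.getElem?_drop, List.getElem?_ofFn] using this

theorem prefix_get {u v : List ℕ} (h : u <+: v) (i : ℕ) (hi : i < u.length) : v[i]? = u[i]? := by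
  obtain ⟨t, rfl⟩ := h
  exact List.getElem?_append_left hi

/-- the subshift `(X, σ)` is minimal: every two-sided orbit is dense in `X`. -/
theorem subshift_minimal (b a : ℕ) (hb : 2 ≤ b) (ha1 : 1 ≤ a) (ha2 : a ≤ b - 1)
    (x : ℤ → ℕ) (hx : InX b a x) :
    {y | InX b a y} ⊆ closure {y | ∃ n : ℤ, y = fun m => x (m + n)} := by
  intro y hy
  have key : ∀ N : ℕ, ∃ n : ℤ, ∀ m : ℤ, |m| ≤ N → x (m + n) = y m := by
    intro N
    obtain ⟨k, p, h1⟩ := hy (-N) (2 * N + 1)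
    obtain ⟨hl, hg⟩ := occ_get h1
    obtain ⟨n, p', h2⟩ := hx 0 (2 * (Bword b a k).length)
    obtain ⟨hl', hg'⟩ := occ_get h2
    have hpre := (Bword_good b a hb ha1 ha2 n k).prefix
    have hgood := Bword_good b a hb ha1 ha2 k n
    rw [Nat.add_comm k n] at hgood
    obtain ⟨q, hq1, hq2, hq3⟩ := hgood.find (Bword_len b a k) p' (hl'.trans hpre.length_le)
    refine ⟨(q : ℤ) - p' + p + N, fun m hm => ?_⟩
    rw [abs_le] at hm
    obtain ⟨j, hj⟩ := Int.eq_ofNat_of_zero_le (show 0 ≤ m + N by omega)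
    have hjl : j < 2 * N + 1 := by omega
    have e1 := hg j hjl
    have e2 := prefix_get hq3 (p + j) (by omega)
    rw [List.getElem?_drop] at e2
    have e3 := hg' (q - p' + (p + j)) (by omega)
    have e4 := prefix_get hpre (p' + (q - p' + (p + j))) (by omega)
    rw [show p' + (q - p' + (p + j)) = q + (p + j) by omega] at e3 e4
    rw [← e4, e2, e1] at e3
    have e5 := Option.some.inj e3
    rw [show m = -(N : ℤ) + j by omega, e5]
    congr 1
    omega
  rw [mem_closure_iff_nhds]
  intro t ht
  rw [nhds_pi, Filter.mem_pi] at ht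
  obtain ⟨I, hI, s, hs, hst⟩ := ht
  obtain ⟨N, hN⟩ : ∃ N : ℕ, ∀ m ∈ I, |m| ≤ (N : ℤ) := by
    obtain ⟨N, hN⟩ := (hI.image Int.natAbs).bddAbove
    exact ⟨N, fun m hm => by
      have h : m.natAbs ≤ N := hN (Set.mem_image_of_mem _ hm)
      rw [Int.abs_eq_natAbs]
      exact_mod_cast h⟩
  obtain ⟨n, hn⟩ := key N
  refine ⟨fun m => x (m + n), hst ?_, n, rfl⟩
  intro i hi
  simp only [hn i (hN i hi)]
  exact mem_of_mem_nhds (hs i)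
end

section
/- For every finite word w over {0,1} of length l ≥ 1, there exists K ∈ ℕ such that for all k ≥ K: |d (k+1) w − d k w| < 2l / h (k+1), where d k w denotes the frequency of occurrences of w in the periodic bi-infinite word … B k B k B k …. -/
open MeasureTheory Filter Topology
open scoped ENNReal

/-- `w` occurs at position `i` in the periodic bi-infinite word `v^∞`. -/
def OccursPer (w v : List ℕ) (i : ℕ) : Prop :=
  ∀ r < w.length, v.getD ((i + r) % v.length) 0 = w.getD r 0

open Classical in
/-- `d k w`: the frequency of occurrences of `w` in the periodic word `(B k)^∞`. -/
noncomputable def dfreq (b a k : ℕ) (w : List ℕ) : ℝ :=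
  (((Finset.range (hseq b k)).filter fun i => OccursPer w (Bword b a k) i).card : ℝ) /
    (hseq b k : ℝ)

theorem wordPow_length (w : List ℕ) (m : ℕ) : (wordPow w m).length = m * w.length := by
  simp [wordPow]

theorem wordPow_getD (w : List ℕ) (m n : ℕ) (h : n < m * w.length) :
    (wordPow w m).getD n 0 = w.getD (n % w.length) 0 := by
  induction m generalizing n with
  | zero => simp at h
  | succ m ih =>
    have e : wordPow w (m+1) = w ++ wordPow w m := by
      simp [wordPow, List.replicate_succ]
    rw [e]
    by_cases hn : n < w.length
    · rw [List.getD_append _ _ _ _ hn, Nat.mod_eq_of_lt hn]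
    · push Not at hn
      rw [List.getD_append_right _ _ _ _ hn, ih _ (by rw [Nat.add_mul] at h; omega),
        Nat.mod_eq_sub_mod hn]

theorem pow_split (b a k : ℕ) (ha2 : a ≤ b) : a * b ^ k + (b - a) * b ^ k = b ^ (k+1) := by
  rw [← Nat.add_mul, Nat.add_sub_cancel' ha2, pow_succ, Nat.mul_comm]

theorem Bword_length (b a : ℕ) (ha2 : a ≤ b) (k : ℕ) : (Bword b a k).length = hseq b k := by
  induction k with
  | zero => rfl
  | succ k ih =>
    simp only [Bword, List.length_append, wordPow_length, hseq, ih, List.length_singleton]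
    rw [← pow_split b a k ha2]; ring

theorem Bword_shift (b a : ℕ) (ha2 : a ≤ b) (k t : ℕ) (ht : t < b ^ (k+1) * hseq b k) :
    (Bword b a (k+1)).getD ((a * b ^ k * hseq b k + 1 + t) % hseq b (k+1)) 0
      = (Bword b a k).getD (t % hseq b k) 0 := by
  have hL := Bword_length b a ha2 k
  have hs := pow_split b a k ha2
  have e : hseq b (k+1) = b ^ (k+1) * hseq b k + 1 := rfl
  have e2 : b ^ (k+1) * hseq b k = a * b ^ k * hseq b k + (b - a) * b ^ k * hseq b k := by
    rw [← hs]; ring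
  simp only [Bword]
  set p := a * b ^ k
  set q := (b - a) * b ^ k
  set H := hseq b k
  by_cases h : t < q * H
  · rw [Nat.mod_eq_of_lt (by omega), List.getD_append_right _ _ _ _
      (by simp [wordPow_length, hL])]
    rw [wordPow_getD _ _ _ (by simp [wordPow_length, hL]; omega)]
    simp only [List.length_append, wordPow_length, hL, List.length_singleton,
      Nat.add_sub_cancel_left]
  · push Not at h
    have e3 : p * H + 1 + t = hseq b (k+1) + (t - q * H) := by omega
    rw [e3, Nat.add_mod_left, Nat.mod_eq_of_lt (by omega), List.append_assoc,
      List.getD_append _ _ _ _ (by simp [wordPow_length, hL]; omega),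
      wordPow_getD _ _ _ (by rw [hL]; omega), hL]
    congr 1
    conv_rhs => rw [← Nat.sub_add_cancel h]
    rw [Nat.add_mul_mod_self_right]

theorem occ_periodic (w v : List ℕ) : Function.Periodic (OccursPer w v) v.length := by
  intro i
  have : ∀ r, (i + v.length + r) % v.length = (i + r) % v.length := by
    intro r
    rw [show i + v.length + r = i + r + v.length by ring, Nat.add_mod_right]
  simp only [OccursPer, this]

open Classical in
theorem count_mul_periodic (P : ℕ → Prop) (H m : ℕ) (hP : Function.Periodic P H) :
    Nat.count P (m * H) = m * Nat.count P H := by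
  induction m with
  | zero => simp
  | succ m ih =>
    rw [Nat.add_mul, one_mul, Nat.count_add, ih]
    have : (fun k => P (m * H + k)) = P := by
      funext x
      have := (hP.nat_mul m) x
      rw [add_comm]; simpa using this
    simp only [this]; ring

open Classical in
theorem count_shift_periodic (P : ℕ → Prop) (H c : ℕ) (hP : Function.Periodic P H) :
    Nat.count (fun t => P (c + t)) H = Nat.count P H := by
  have h1 := Nat.count_add P c H
  have h2 := Nat.count_add P H c
  have : (fun k => P (H + k)) = P := by
    funext x; rw [add_comm]; exact hP x
  simp only [this] at h2
  rw [add_comm c H] at h1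
  omega

open Classical in
theorem count_compare (P Q : ℕ → Prop) (M l : ℕ) (hl : 1 ≤ l)
    (h : ∀ t, t + l ≤ M → (Q t ↔ P t)) :
    Nat.count Q (M+1) ≤ Nat.count P M + l ∧ Nat.count P M + 1 ≤ Nat.count Q (M+1) + l := by
  by_cases hM : l ≤ M
  · obtain ⟨G, rfl⟩ : ∃ G, M = G + (l - 1) := ⟨M - (l-1), by omega⟩
    have e : G + (l - 1) + 1 = G + l := by omega
    rw [e, Nat.count_add, Nat.count_add]
    have hc : Nat.count Q G = Nat.count P G := by
      simp only [Nat.count_eq_card_filter_range]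
      congr 1
      apply Finset.filter_congr
      intro x hx
      rw [Finset.mem_range] at hx
      exact h x (by omega)
    have h1 := Nat.count_le (p := fun k => Q (G + k)) (n := l)
    have h2 := Nat.count_le (p := fun k => P (G + k)) (n := l - 1)
    omega
  · have h1 := Nat.count_le (p := Q) (n := M+1)
    have h2 := Nat.count_le (p := P) (n := M)
    omega

theorem dfreq_cauchy_bound (b a : ℕ) (hb : 2 ≤ b) (ha1 : 1 ≤ a) (ha2 : a ≤ b - 1)
    (w : List ℕ) (hw : ∀ c ∈ w, c ≤ 1) (hl : 1 ≤ w.length) :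
    ∃ K : ℕ, ∀ k ≥ K,
      |dfreq b a (k + 1) w - dfreq b a k w| < 2 * (w.length : ℝ) / (hseq b (k + 1) : ℝ) := by
  classical
  refine ⟨0, fun k _ => ?_⟩
  have hab : a ≤ b := by omega
  have hL := Bword_length b a hab k
  have hL' := Bword_length b a hab (k+1)
  have hp := occ_periodic w (Bword b a k)
  have hp' := occ_periodic w (Bword b a (k+1))
  rw [hL] at hp
  rw [hL'] at hp'
  have hpos : 0 < hseq b k := by cases k <;> simp [hseq]
  have e : hseq b (k+1) = b ^ (k+1) * hseq b k + 1 := rfl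
  have key := count_compare (OccursPer w (Bword b a k))
    (fun t => OccursPer w (Bword b a (k+1)) (a * b ^ k * hseq b k + 1 + t))
    (b ^ (k+1) * hseq b k) w.length hl (by
      intro t ht
      simp only [OccursPer, hL, hL']
      refine forall_congr' fun r => forall_congr' fun hr => ?_
      rw [add_assoc _ t r, Bword_shift b a hab k (t + r) (by omega)])
  rw [← e, count_shift_periodic _ _ _ hp', count_mul_periodic _ _ _ hp] at key
  have hle := Nat.count_le (p := OccursPer w (Bword b a k)) (n := hseq b k)
  have d1 : dfreq b a (k+1) w =
      (Nat.count (OccursPer w (Bword b a (k+1))) (hseq b (k+1)) : ℝ) / hseq b (k+1) := by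
    rw [dfreq, Nat.count_eq_card_filter_range]
  have d0 : dfreq b a k w =
      (Nat.count (OccursPer w (Bword b a k)) (hseq b k) : ℝ) / hseq b k := by
    rw [dfreq, Nat.count_eq_card_filter_range]
  rw [d1, d0]
  generalize Nat.count (OccursPer w (Bword b a (k+1))) (hseq b (k+1)) = N' at *
  generalize Nat.count (OccursPer w (Bword b a k)) (hseq b k) = N at *
  have e' : (hseq b (k+1) : ℝ) = (b:ℝ) ^ (k+1) * hseq b k + 1 := by rw [e]; push_cast; rfl
  obtain ⟨k1, k2⟩ := key
  have k1' : (N' : ℝ) ≤ (b:ℝ) ^ (k+1) * N + w.length := by exact_mod_cast k1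
  have k2' : (b:ℝ) ^ (k+1) * N + 1 ≤ (N' : ℝ) + w.length := by exact_mod_cast k2
  have hH : (0:ℝ) < hseq b k := by exact_mod_cast hpos
  have hH' : (0:ℝ) < hseq b (k+1) := by rw [e']; positivity
  have hN : (N:ℝ) / hseq b k ≤ 1 := by
    rw [div_le_one hH]; exact_mod_cast hle
  have hN0 : 0 ≤ (N:ℝ) / hseq b k := by positivity
  have hl' : (1:ℝ) ≤ w.length := by exact_mod_cast hl
  have eq : (N':ℝ) / hseq b (k+1) - (N:ℝ) / hseq b k
      = (N' - (b:ℝ) ^ (k+1) * N - (N:ℝ) / hseq b k) / hseq b (k+1) := by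
    rw [eq_div_iff hH'.ne', sub_mul, div_mul_cancel₀ _ hH'.ne', e']
    field_simp
    ring
  rw [eq, abs_div, abs_of_pos hH']
  apply div_lt_div_of_pos_right _ hH'
  rw [abs_lt]
  constructor <;> linarith
end

section
/- The subshift (X, σ) is uniquely ergodic: there exists exactly one Borel probability measure on X that is invariant under the left shift σ. -/
open MeasureTheory Filter Topology
open scoped ENNReal

namespace UE

inductive Good (W : List ℕ) : List ℕ → Prop
  | base : Good W W
  | app (u t v : List ℕ) : Good W u → Good W v → (t = [] ∨ t = [1]) → Good W (u ++ t ++ v)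

theorem t_split {t r s : List ℕ} (ht : t = [] ∨ t = [1]) (h : t = r ++ s) :
    (r = [] ∨ r = [1]) ∧ (s = [] ∨ s = [1]) := by
  rcases ht with rfl | rfl
  · simp at h; simp [h]
  · rcases List.append_eq_cons_iff.1 h.symm with h | h
    · simp [h]
    · obtain ⟨a, h1, h2⟩ := h
      simp at h2
      simp [h1, h2]

theorem pre_split {u t v p : List ℕ} (ht : t = [] ∨ t = [1]) (h : p <+: u ++ t ++ v) :
    p <+: u ∨ ∃ t' q, p = u ++ t' ++ q ∧ (t' = [] ∨ t' = [1]) ∧ q <+: v := by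
  obtain ⟨z, hz⟩ := h
  rw [List.append_assoc u] at hz
  rcases List.append_eq_append_iff.1 hz with ⟨c, h1, h2⟩ | ⟨c, h1, h2⟩
  · left; exact ⟨c, h1.symm⟩
  · right
    rcases List.append_eq_append_iff.1 h2 with ⟨d, h3, h4⟩ | ⟨d, h3, h4⟩
    · exact ⟨t, d, by simp [h1, h3], ht, ⟨z, h4.symm⟩⟩
    · exact ⟨c, [], by simp [h1], (t_split ht h3).1, List.nil_prefix⟩

theorem suf_split {u t v p : List ℕ} (ht : t = [] ∨ t = [1]) (h : p <:+ u ++ t ++ v) :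
    p <:+ v ∨ ∃ t' q, p = q ++ t' ++ v ∧ (t' = [] ∨ t' = [1]) ∧ q <:+ u := by
  obtain ⟨z, hz⟩ := h
  rcases List.append_eq_append_iff.1 hz with ⟨c, h1, h2⟩ | ⟨c, h1, h2⟩
  · right
    rcases List.append_eq_append_iff.1 h1 with ⟨d, h3, h4⟩ | ⟨d, h3, h4⟩
    · exact ⟨c, [], by simp [h2], (t_split ht h4).2, List.nil_suffix⟩
    · exact ⟨t, d, by simp [h2, h4], ht, ⟨z, h3.symm⟩⟩
  · left; exact ⟨c, h2.symm⟩

theorem inf_split {u t v x : List ℕ} (ht : t = [] ∨ t = [1]) (h : x <:+: u ++ t ++ v) :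
    x <:+: u ∨ x <:+: v ∨ ∃ s t' p, x = s ++ t' ++ p ∧ (t' = [] ∨ t' = [1]) ∧ s <:+ u ∧ p <+: v := by
  obtain ⟨y, z, hz⟩ := h
  have h1 : y ++ x <+: u ++ t ++ v := ⟨z, hz⟩
  rcases pre_split ht h1 with h | ⟨t', q, h, ht', hq⟩
  · left; obtain ⟨c, hc⟩ := h; exact ⟨y, c, hc⟩
  · have h2 : x <:+ u ++ t' ++ q := ⟨y, h⟩
    right
    rcases suf_split ht' h2 with h | ⟨t'', r, h, ht'', hr⟩
    · left; exact h.isInfix.trans hq.isInfix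
    · right; exact ⟨r, t'', q, h, ht'', hr, hq⟩

theorem quasi (F : List ℕ → ℝ) (J ε : ℝ) (hJ : 0 ≤ J) (hε : 0 ≤ ε) (W : List ℕ)
    (hj : ∀ u t v, (t = [] ∨ t = [1]) → |F (u ++ t ++ v) - F u - F v| ≤ J)
    (hF : ∀ v, |F v| ≤ v.length) (hW : F W = 0) (hWJ : J ≤ ε * W.length) {u : List ℕ}
    (hu : Good W u) :
    |F u| + J ≤ ε * u.length ∧ (∀ p, p <+: u → |F p| ≤ W.length + ε * p.length) ∧
    (∀ p, p <:+ u → |F p| ≤ W.length + ε * p.length) ∧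
    (∀ p, p <:+: u → |F p| ≤ 2 * W.length + J + ε * p.length) := by
  have key : ∀ u t v, (t = [] ∨ t = [1]) → |F (u ++ t ++ v)| ≤ |F u| + |F v| + J := by
    intro u t v ht
    have := hj u t v ht
    have h2 : F (u ++ t ++ v) = (F (u ++ t ++ v) - F u - F v) + (F u + F v) := by ring
    rw [h2]
    have := abs_add_le (F (u ++ t ++ v) - F u - F v) (F u + F v)
    have := abs_add_le (F u) (F v)
    linarith
  have len : ∀ u t v : List ℕ, ε * u.length + ε * v.length ≤ ε * ((u ++ t ++ v).length : ℝ) := by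
    intro u t v
    rw [← mul_add]
    apply mul_le_mul_of_nonneg_left _ hε
    simp only [List.length_append]; push_cast
    have : (0:ℝ) ≤ t.length := by positivity
    linarith
  induction hu with
  | base =>
    have tr : ∀ p : List ℕ, p.length ≤ W.length → |F p| ≤ W.length ∧ 0 ≤ ε * p.length := by
      intro p hp
      have : (p.length : ℝ) ≤ W.length := by exact_mod_cast hp
      exact ⟨(hF p).trans this, by positivity⟩
    refine ⟨by simpa [hW] using hWJ, fun p hp => ?_, fun p hp => ?_, fun p hp => ?_⟩
    · have := tr p hp.length_le; linarith
    · have := tr p hp.length_le; linarith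
    · have := tr p hp.length_le
      have : (0:ℝ) ≤ W.length := by positivity
      linarith
  | app u t v hu hv ht iu iv =>
    obtain ⟨u0, u1, u2, u3⟩ := iu
    obtain ⟨v0, v1, v2, v3⟩ := iv
    refine ⟨?_, fun p hp => ?_, fun p hp => ?_, fun p hp => ?_⟩
    · have := key u t v ht
      have := len u t v
      linarith
    · rcases pre_split ht hp with h | ⟨t', q, rfl, ht', hq⟩
      · exact u1 p h
      · have := key u t' q ht'
        have := len u t' q
        have := v1 q hq
        linarith
    · rcases suf_split ht hp with h | ⟨t', q, rfl, ht', hq⟩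
      · exact v2 p h
      · have := key q t' v ht'
        have := len q t' v
        have := u2 q hq
        linarith
    · rcases inf_split ht hp with h | h | ⟨s, t', q, rfl, ht', hs, hq⟩
      · exact u3 p h
      · exact v3 p h
      · have := key s t' q ht'
        have := len s t' q
        have := u2 s hs
        have := v1 q hq
        linarith

theorem good_pow {W u : List ℕ} (hu : Good W u) (m : ℕ) : Good W (wordPow u (m + 1)) := by
  induction m with
  | zero => simpa [wordPow] using hu
  | succ n ih =>
    have := Good.app u [] _ hu ih (Or.inl rfl)
    simpa [wordPow, List.replicate_succ] using this

theorem good_pow' {W u : List ℕ} (hu : Good W u) {m : ℕ} (hm : 0 < m) : Good W (wordPow u m) := by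
  obtain ⟨n, rfl⟩ := Nat.exists_eq_succ_of_ne_zero hm.ne'
  exact good_pow hu n


theorem good_B {b a : ℕ} (hb : 2 ≤ b) (ha1 : 1 ≤ a) (ha2 : a ≤ b - 1) (k n : ℕ) : Good (Bword b a k) (Bword b a (k + n)) := by
  induction n with
  | zero => exact Good.base
  | succ n ih =>
    have h1 : 0 < b ^ (k + n) := by positivity
    exact Good.app _ [1] _ (good_pow' ih (Nat.mul_pos (by omega) h1))
      (good_pow' ih (Nat.mul_pos (by omega) h1)) (Or.inr rfl)

theorem good_infix {W u : List ℕ} (hu : Good W u) : W <:+: u := by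
  induction hu with
  | base => exact List.infix_rfl
  | app u t v _ _ _ iu _ =>
    exact iu.trans ⟨[], t ++ v, by simp⟩

theorem B_len {b a : ℕ} (hb : 2 ≤ b) (ha1 : 1 ≤ a) (k : ℕ) : k + 1 ≤ (Bword b a k).length := by
  induction k with
  | zero => simp [Bword]
  | succ n ih =>
    have h1 : 0 < b ^ n := by positivity
    have h2 : 0 < a * b ^ n := Nat.mul_pos (by omega) h1
    have : (Bword b a n).length ≤ (wordPow (Bword b a n) (a * b ^ n)).length := by
      simp only [wordPow, List.length_flatten, List.map_replicate, List.sum_replicate, smul_eq_mul]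
      exact Nat.le_mul_of_pos_left _ h2
    simp only [Bword, List.length_append, List.length_singleton]
    omega

theorem B_mem {b a : ℕ} (k : ℕ) : ∀ c ∈ Bword b a k, c = 0 ∨ c = 1 := by
  induction k with
  | zero => simp [Bword]
  | succ n ih =>
    intro c hc
    simp only [Bword, wordPow, List.mem_append, List.mem_flatten, List.mem_replicate, List.mem_singleton] at hc
    rcases hc with (⟨l, ⟨_, rfl⟩, h⟩ | h) | ⟨l, ⟨_, rfl⟩, h⟩
    · exact ih c h
    · exact Or.inr h
    · exact ih c h

def cnt (w : List ℕ) : List ℕ → ℕ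
  | [] => 0
  | c :: v => cnt w v + if w <+: c :: v then 1 else 0

theorem cnt_le (w v : List ℕ) : cnt w v ≤ v.length := by
  induction v with
  | nil => simp [cnt]
  | cons c v ih => simp only [cnt, List.length_cons]; split_ifs <;> omega

theorem cnt_append (w u v : List ℕ) : cnt w u + cnt w v ≤ cnt w (u ++ v) ∧
    cnt w (u ++ v) ≤ cnt w u + cnt w v + min u.length w.length := by
  induction u with
  | nil => simp [cnt]
  | cons c u ih =>
    simp only [cnt, List.cons_append, List.length_cons]
    by_cases h1 : w <+: c :: u
    · have h2 : w <+: c :: (u ++ v) := h1.trans ⟨v, by simp⟩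
      simp only [h1, h2, if_true]
      omega
    · by_cases h2 : w <+: c :: (u ++ v)
      · have h3 : u.length + 1 < w.length := by
          by_contra hcon
          exact h1 (List.prefix_of_prefix_length_le h2 (l₂ := c :: u) ⟨v, by simp⟩ (by simp; omega))
        simp only [h1, h2, if_true, if_false]
        omega
      · simp only [h1, h2, if_false]
        omega

def blk (x : ℤ → ℕ) (m : ℤ) (l : ℕ) : List ℕ := List.ofFn fun i : Fin l => x (m + (i : ℕ))

theorem blk_succ (x : ℤ → ℕ) (m : ℤ) (l : ℕ) : blk x m (l + 1) = x m :: blk x (m + 1) l := by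
  simp only [blk, List.ofFn_succ]
  simp
  funext i
  congr 1
  ring

theorem blk_eq_iff (x : ℤ → ℕ) (m : ℤ) (w : List ℕ) : blk x m w.length = w ↔ BlockEq x m w := by
  constructor
  · intro h i hi
    have : (blk x m w.length)[i]'(by simpa [blk] using hi) = w[i] := by simp [h]
    simp [blk] at this
    simp [this, hi]
  · intro h
    apply List.ext_getElem
    · simp [blk]
    · intro i h1 h2
      have := h i h2
      simp [blk, this, h2]

theorem prefix_blk (x : ℤ → ℕ) (m : ℤ) (L : ℕ) (w : List ℕ) :
    w <+: blk x m L ↔ BlockEq x m w ∧ w.length ≤ L := by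
  have hpre : ∀ l ≤ L, blk x m l = (blk x m L).take l := by
    intro l hl
    apply List.ext_getElem
    · simp [blk, hl]
    · intro i h1 h2; simp [blk]
  constructor
  · intro h
    have hl : w.length ≤ L := by simpa [blk] using h.length_le
    refine ⟨?_, hl⟩
    rw [← blk_eq_iff, hpre _ hl]
    exact (List.prefix_iff_eq_take.1 h).symm
  · rintro ⟨h, hl⟩
    rw [← blk_eq_iff, hpre _ hl] at h
    exact List.prefix_iff_eq_take.2 h.symm

open Classical in
theorem sum_cnt (x : ℤ → ℕ) (w : List ℕ) (L : ℕ) : ∀ m : ℤ,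
    cnt w (blk x m L) ≤ ∑ i ∈ Finset.range L, (if BlockEq x (m + i) w then 1 else 0) ∧
    ∑ i ∈ Finset.range L, (if BlockEq x (m + i) w then 1 else 0) ≤
      cnt w (blk x m L) + min L w.length := by
  induction L with
  | zero => intro m; simp [blk, cnt]
  | succ L ih =>
    intro m
    rw [Finset.sum_range_succ']
    have h := ih (m + 1)
    have e : ∀ i : ℕ, m + ((i + 1 : ℕ) : ℤ) = m + 1 + i := by intro i; push_cast; ring
    simp only [e]
    rw [blk_succ]
    simp only [cnt]
    rw [← blk_succ]
    have := prefix_blk x m (L + 1) w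
    generalize (∑ i ∈ Finset.range L, if BlockEq x (m + 1 + i) w then 1 else 0) = S at *
    by_cases h1 : BlockEq x m w
    · by_cases h2 : w.length ≤ L + 1
      · simp only [this, h1, h2]; simp [h1]; omega
      · simp only [this, h1, h2]; simp [h1]; omega
    · simp only [this, h1]; simp [h1]; omega

theorem occ_infix {w v : List ℕ} {p : ℕ} (h : OccursAt w v p) : w <:+: v := by
  rw [← h.2]
  exact (List.take_prefix _ _).isInfix.trans (List.drop_suffix _ _).isInfix

open Classical in
theorem freq {b a : ℕ} (hb : 2 ≤ b) (ha1 : 1 ≤ a) (ha2 : a ≤ b - 1) (w : List ℕ) (k : ℕ) :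
    ∃ ρ C : ℝ, ∀ x, InX b a x → ∀ (m : ℤ) (L : ℕ),
      |∑ i ∈ Finset.range L, (if BlockEq x (m + i) w then (1:ℝ) else 0) - ρ * L| ≤
        C + ((2 * w.length + 1 : ℝ) / (k + 1)) * L := by
  set W := Bword b a k with hW
  have hWl : k + 1 ≤ W.length := B_len hb ha1 k
  have hWl' : (k + 1 : ℝ) ≤ W.length := by exact_mod_cast hWl
  have hW0 : (0:ℝ) < W.length := by linarith [Nat.cast_nonneg (α := ℝ) k]
  set ρ : ℝ := cnt w W / W.length with hρ
  have hρ0 : 0 ≤ ρ := by positivity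
  have hρ1 : ρ ≤ 1 := by
    rw [hρ, div_le_one hW0]
    exact_mod_cast cnt_le w W
  set J : ℝ := 2 * w.length + 1 with hJ
  set ε : ℝ := J / (k + 1) with hε
  have hJ0 : 0 ≤ J := by positivity
  have hε0 : 0 ≤ ε := by positivity
  let F : List ℕ → ℝ := fun v => cnt w v - ρ * v.length
  have q := @quasi F J ε hJ0 hε0 W ?_ ?_ ?_ ?_
  · refine ⟨ρ, 2 * W.length + J + w.length, fun x hx m L => ?_⟩
    obtain ⟨n, p, hp⟩ := hx m L
    have hi : blk x m L <:+: Bword b a (k + n) := by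
      refine (occ_infix hp).trans ?_
      rw [Nat.add_comm]
      exact good_infix (good_B hb ha1 ha2 n k)
    have h1 := (q (good_B hb ha1 ha2 k n)).2.2.2 _ hi
    have hl : (blk x m L).length = L := by simp [blk]
    simp only [F, hl] at h1
    obtain ⟨s1, s2⟩ := sum_cnt x w L m
    have s1' : (cnt w (blk x m L) : ℝ) ≤
      ∑ i ∈ Finset.range L, (if BlockEq x (m + i) w then (1:ℝ) else 0) := by exact_mod_cast s1
    have s2' : ∑ i ∈ Finset.range L, (if BlockEq x (m + i) w then (1:ℝ) else 0) ≤
        cnt w (blk x m L) + w.length := by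
      have := s2.trans (Nat.add_le_add_left (min_le_right _ _) _)
      exact_mod_cast this
    rw [abs_le] at h1 ⊢
    constructor <;> linarith [h1.1, h1.2]
  · intro u t v ht
    have c1 := cnt_append w (u ++ t) v
    have c2 := cnt_append w u t
    have c3 := cnt_le w t
    have c4 : t.length ≤ 1 := by rcases ht with rfl | rfl <;> simp
    have d1 : (cnt w (u ++ t ++ v) : ℝ) ≤ cnt w u + cnt w v + 2 * w.length + 1 := by
      have : cnt w (u ++ t ++ v) ≤ cnt w u + cnt w v + 2 * w.length + 1 := by omega
      exact_mod_cast this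
    have d2 : (cnt w u + cnt w v : ℝ) ≤ cnt w (u ++ t ++ v) := by
      have : cnt w u + cnt w v ≤ cnt w (u ++ t ++ v) := by omega
      exact_mod_cast this
    have d3 : (t.length : ℝ) ≤ 1 := by exact_mod_cast c4
    have d4 : (0:ℝ) ≤ t.length := by positivity
    have d5 : 0 ≤ ρ * t.length := by positivity
    have d6 : ρ * t.length ≤ 1 := by nlinarith
    have d7 : (0:ℝ) ≤ w.length := by positivity
    have : F (u ++ t ++ v) - F u - F v =
        cnt w (u ++ t ++ v) - cnt w u - cnt w v - ρ * t.length := by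
      simp only [F, List.length_append]; push_cast; ring
    rw [this, abs_le]
    constructor <;> linarith
  · intro v
    have c1 : (cnt w v : ℝ) ≤ v.length := by exact_mod_cast cnt_le w v
    have c2 : (0:ℝ) ≤ cnt w v := by positivity
    have c3 : (0:ℝ) ≤ v.length := by positivity
    have c4 : 0 ≤ ρ * v.length := by positivity
    have c5 : ρ * v.length ≤ v.length := by nlinarith
    simp only [F, abs_le]
    constructor <;> linarith
  · simp only [F, hρ]; field_simp; simp
  · rw [hε, div_mul_eq_mul_div, le_div_iff₀ (by positivity)]
    exact mul_le_mul_of_nonneg_left hWl' hJ0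

/-- cylinder -/
def Cyl (m : ℤ) (w : List ℕ) : Set (ℤ → ℕ) := {x | BlockEq x m w}

theorem Cyl_clopen (m : ℤ) (w : List ℕ) : IsClopen (Cyl m w) := by
  have : Cyl m w = ⋂ i ∈ Finset.range w.length, {x : ℤ → ℕ | x (m + i) = w.getD i 0} := by
    ext x; simp [Cyl, BlockEq]
  rw [this]
  apply isClopen_biInter_finset
  intro i _
  exact (isClopen_discrete {w.getD i 0}).preimage (continuous_apply (m + (i : ℤ)))

theorem Cyl_meas (m : ℤ) (w : List ℕ) : MeasurableSet (Cyl m w) := (Cyl_clopen m w).isOpen.measurableSet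

theorem shift_meas : Measurable shiftMap := by
  unfold shiftMap; fun_prop

theorem shift_pre (m : ℤ) (w : List ℕ) : shiftMap ⁻¹' Cyl m w = Cyl (m + 1) w := by
  ext x
  simp only [Cyl, BlockEq, shiftMap, Set.mem_preimage, Set.mem_ofPred_eq]
  constructor <;> intro h i hi <;> rw [← h i hi] <;> congr 1 <;> ring

theorem ext_cyl (μ ν : Measure (ℤ → ℕ)) [IsFiniteMeasure μ] [IsFiniteMeasure ν]
    (h : ∀ m w, μ (Cyl m w) = ν (Cyl m w)) : μ = ν := by
  have key : ∀ n : ℕ, μ.map (Finset.Ico (-n : ℤ) n).restrict = ν.map (Finset.Ico (-n : ℤ) n).restrict := by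
    intro n
    apply Measure.ext_of_singleton
    intro g
    rw [Measure.map_apply (by fun_prop) (measurableSet_singleton _),
      Measure.map_apply (by fun_prop) (measurableSet_singleton _)]
    have : (Finset.Ico (-n : ℤ) n).restrict (π := fun _ => ℕ) ⁻¹' {g} =
        Cyl (-n) (List.ofFn fun i : Fin (2 * n) => g ⟨-n + i, by simp; omega⟩) := by
      ext x
      simp only [Set.mem_preimage, Set.mem_singleton_iff, Cyl, BlockEq, Set.mem_ofPred_eq,
        List.length_ofFn]
      constructor
      · rintro rfl i hi
        simp [hi]
      · intro hx
        funext ⟨j, hj⟩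
        have hj' := hj
        simp only [Finset.mem_Ico] at hj'
        have h1 : (j + n).toNat < 2 * n := by omega
        have := hx _ h1
        have e : (-n + ((j + n).toNat : ℤ)) = j := by omega
        simp only [e] at this
        simp [h1] at this
        simp only [Finset.restrict, this]
        congr 1
        ext
        simp; omega
    rw [this, h]
  refine IsProjectiveLimit.unique (P := fun I => ν.map I.restrict) (fun I => ?_) (fun I => rfl)
  obtain ⟨n, hn⟩ : ∃ n : ℕ, I ⊆ Finset.Ico (-n : ℤ) n := by
    refine ⟨(I.sup fun i => i.natAbs) + 1, fun i hi => ?_⟩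
    have := Finset.le_sup (f := fun i : ℤ => i.natAbs) hi
    simp only [Finset.mem_Ico]
    omega
  have := congrArg (Measure.map (Finset.restrict₂ (π := fun _ => ℕ) hn)) (key n)
  rwa [Measure.map_map (by fun_prop) (by fun_prop), Measure.map_map (by fun_prop) (by fun_prop)] at this

open Classical in
theorem meas_est {b a : ℕ} (hb : 2 ≤ b) (ha1 : 1 ≤ a) (ha2 : a ≤ b - 1) (w : List ℕ) (k : ℕ) :
    ∃ ρ : ℝ, ∀ (μ : Measure (ℤ → ℕ)), IsProbabilityMeasure μ → μ {y | InX b a y}ᶜ = 0 →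
      MeasurePreserving shiftMap μ μ → ∀ m : ℤ,
      |μ.real (Cyl m w) - ρ| ≤ (2 * w.length + 1 : ℝ) / (k + 1) := by
  obtain ⟨ρ, C, h⟩ := freq hb ha1 ha2 w k
  refine ⟨ρ, fun μ hμ hX hs m => ?_⟩
  set ε := (2 * w.length + 1 : ℝ) / (k + 1)
  have inv : ∀ i : ℕ, μ.real (Cyl (m + i) w) = μ.real (Cyl m w) := by
    intro i
    induction i with
    | zero => simp
    | succ i ih =>
      rw [← ih, Nat.cast_succ, ← add_assoc, ← shift_pre, measureReal_def, measureReal_def,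
        hs.measure_preimage (Cyl_meas _ _).nullMeasurableSet]
  have ae : ∀ᵐ x ∂μ, InX b a x := hX
  have main : ∀ L : ℕ, |μ.real (Cyl m w) - ρ| * L ≤ C + ε * L := by
    intro L
    have hint : ∀ i ∈ Finset.range L, Integrable ((Cyl (m + i) w).indicator (fun _ => (1:ℝ))) μ :=
      fun i _ => (integrable_const _).indicator (Cyl_meas _ _)
    have e : ∫ x, (∑ i ∈ Finset.range L, (Cyl (m + i) w).indicator (fun _ => (1:ℝ)) x - ρ * L) ∂μ
        = (μ.real (Cyl m w) - ρ) * L := by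
      rw [integral_sub (integrable_finsetSum _ hint) (integrable_const _),
        integral_finsetSum _ hint]
      simp [integral_indicator_const, Cyl_meas, inv]
      ring
    have := norm_integral_le_of_norm_le_const (μ := μ) (C := C + ε * L)
      (f := fun x => ∑ i ∈ Finset.range L, (Cyl (m + i) w).indicator (fun _ => (1:ℝ)) x - ρ * L) (by
        filter_upwards [ae] with x hx
        have := h x hx m L
        simpa [Set.indicator_apply, Cyl] using this)
    rw [e] at this
    simpa [abs_mul] using this
  by_contra hcon
  push Not at hcon
  obtain ⟨L, hL⟩ := exists_nat_gt (C / (|μ.real (Cyl m w) - ρ| - ε))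
  rw [div_lt_iff₀ (by linarith)] at hL
  have := main L
  linarith

theorem unique_part {b a : ℕ} (hb : 2 ≤ b) (ha1 : 1 ≤ a) (ha2 : a ≤ b - 1)
    (μ ν : Measure (ℤ → ℕ)) (hμ : IsProbabilityMeasure μ) (hμX : μ {y | InX b a y}ᶜ = 0)
    (hμs : MeasurePreserving shiftMap μ μ) (hν : IsProbabilityMeasure ν)
    (hνX : ν {y | InX b a y}ᶜ = 0) (hνs : MeasurePreserving shiftMap ν ν) : μ = ν := by
  apply ext_cyl
  intro m w
  rw [← measureReal_eq_measureReal_iff]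
  have key : ∀ k : ℕ, |μ.real (Cyl m w) - ν.real (Cyl m w)| ≤ 2 * (2 * w.length + 1) * (1 / ((k:ℝ) + 1)) := by
    intro k
    obtain ⟨ρ, h⟩ := meas_est hb ha1 ha2 w k
    have h1 := h μ hμ hμX hμs m
    have h2 := h ν hν hνX hνs m
    rw [abs_sub_comm] at h2
    have := abs_sub_le (μ.real (Cyl m w)) ρ (ν.real (Cyl m w))
    have e : 2 * (2 * w.length + 1) * (1 / ((k:ℝ) + 1)) = (2 * w.length + 1 : ℝ) / (k + 1) + (2 * w.length + 1 : ℝ) / (k + 1) := by ring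
    rw [e]
    linarith
  have lim : Tendsto (fun k : ℕ => 2 * (2 * (w.length:ℝ) + 1) * (1 / ((k:ℝ) + 1))) atTop (𝓝 0) := by
    simpa using tendsto_one_div_add_atTop_nhds_zero_nat.const_mul (2 * (2 * (w.length:ℝ) + 1))
  have := ge_of_tendsto' lim key
  have := abs_nonpos_iff.1 this
  linarith

def q (y : ℤ → Bool) : ℤ → ℕ := fun n => (y n).toNat

theorem q_cont : Continuous q := by
  apply continuous_pi
  intro n
  exact (continuous_of_discreteTopology (f := Bool.toNat)).comp (continuous_apply n)

def yk (b a k : ℕ) (i : ℕ) : ℤ → Bool := fun n => decide ((Bword b a k).getD (n + i).toNat 0 = 1)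

noncomputable def emp (b a k : ℕ) : Measure (ℤ → Bool) :=
  ((Bword b a k).length : ℝ≥0∞)⁻¹ •
    ∑ i ∈ Finset.range (Bword b a k).length, Measure.dirac (yk b a k i)

open Classical in
theorem emp_apply (b a k : ℕ) {A : Set (ℤ → Bool)} (hA : MeasurableSet A) :
    emp b a k A = ((Bword b a k).length : ℝ≥0∞)⁻¹ *
      ((∑ i ∈ Finset.range (Bword b a k).length, if yk b a k i ∈ A then 1 else 0 : ℕ) : ℝ≥0∞) := by
  simp only [emp, Measure.smul_apply, Measure.finsetSum_apply, smul_eq_mul]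
  congr 1
  push_cast
  apply Finset.sum_congr rfl
  intro i _
  rw [Measure.dirac_apply' _ hA, Set.indicator_apply]
  simp

theorem emp_prob {b a : ℕ} (hb : 2 ≤ b) (ha1 : 1 ≤ a) (k : ℕ) : IsProbabilityMeasure (emp b a k) := by
  constructor
  have := B_len hb ha1 k
  rw [emp_apply _ _ _ MeasurableSet.univ]
  simp
  apply ENNReal.inv_mul_cancel
  · simp; intro h; simp [h] at this
  · simp

theorem yk_shift (b a k i : ℕ) (m : ℤ) (w : List ℕ) :
    yk b a k i ∈ q ⁻¹' Cyl (m + 1) w ↔ yk b a k (i + 1) ∈ q ⁻¹' Cyl m w := by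
  simp only [Cyl, BlockEq, Set.mem_preimage, Set.mem_ofPred_eq, q, yk]
  have : ∀ j : ℕ, m + 1 + j + i = m + j + ((i + 1 : ℕ) : ℤ) := by intro j; push_cast; ring
  simp only [this]

theorem pre_meas (m : ℤ) (w : List ℕ) : MeasurableSet (q ⁻¹' Cyl m w) :=
  q_cont.measurable (Cyl_meas m w)

open Classical in
theorem emp_inv (b a k : ℕ) (m : ℤ) (w : List ℕ) :
    emp b a k (q ⁻¹' Cyl (m + 1) w) ≤ emp b a k (q ⁻¹' Cyl m w) + ((Bword b a k).length : ℝ≥0∞)⁻¹ ∧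
    emp b a k (q ⁻¹' Cyl m w) ≤ emp b a k (q ⁻¹' Cyl (m + 1) w) + ((Bword b a k).length : ℝ≥0∞)⁻¹ := by
  rw [emp_apply _ _ _ (pre_meas _ _), emp_apply _ _ _ (pre_meas _ _)]
  simp only [yk_shift]
  set g : ℕ → ℕ := fun i => if yk b a k i ∈ q ⁻¹' Cyl m w then 1 else 0 with hg
  set h := (Bword b a k).length
  have e := Finset.sum_range_succ g h
  have e' := Finset.sum_range_succ' g h
  have hg1 : ∀ i, g i ≤ 1 := by intro i; simp only [hg]; split_ifs <;> simp
  have g1 := hg1 0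
  have g2 := hg1 h
  change (h:ℝ≥0∞)⁻¹ * ((∑ i ∈ Finset.range h, g (i + 1) : ℕ) : ℝ≥0∞) ≤ (h:ℝ≥0∞)⁻¹ * ((∑ i ∈ Finset.range h, g i : ℕ) : ℝ≥0∞) + (h:ℝ≥0∞)⁻¹ ∧
    (h:ℝ≥0∞)⁻¹ * ((∑ i ∈ Finset.range h, g i : ℕ) : ℝ≥0∞) ≤ (h:ℝ≥0∞)⁻¹ * ((∑ i ∈ Finset.range h, g (i + 1) : ℕ) : ℝ≥0∞) + (h:ℝ≥0∞)⁻¹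
  have k1 : ∑ i ∈ Finset.range h, g (i + 1) ≤ ∑ i ∈ Finset.range h, g i + 1 := by omega
  have k2 : ∑ i ∈ Finset.range h, g i ≤ ∑ i ∈ Finset.range h, g (i + 1) + 1 := by omega
  constructor
  · calc _ ≤ (h:ℝ≥0∞)⁻¹ * ((∑ i ∈ Finset.range h, g i + 1 : ℕ) : ℝ≥0∞) := by gcongr
      _ = _ := by push_cast; ring
  · calc _ ≤ (h:ℝ≥0∞)⁻¹ * ((∑ i ∈ Finset.range h, g (i + 1) + 1 : ℕ) : ℝ≥0∞) := by gcongr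
      _ = _ := by push_cast; ring

theorem occ_of (b a k i : ℕ) (m : ℤ) (w : List ℕ) (h : yk b a k i ∈ q ⁻¹' Cyl m w)
    (h0 : 0 ≤ m + i) (h1 : m + i + w.length ≤ (Bword b a k).length) :
    OccursAt w (Bword b a k) (m + i).toNat := by
  refine ⟨by omega, ?_⟩
  apply List.ext_getElem
  · simp; omega
  · intro j h2 h3
    simp only [Cyl, BlockEq, Set.mem_preimage, Set.mem_ofPred_eq, q, yk] at h
    have := h j h3
    have e : (m + j + i).toNat = (m + i).toNat + j := by omega
    have hlt : (m + i).toNat + j < (Bword b a k).length := by omega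
    rw [e] at this
    have hm := B_mem k _ (List.getElem_mem hlt)
    simp [hlt, h3] at this
    simp
    rw [← this]
    rcases hm with hm | hm <;> simp [hm]

open Classical in
theorem emp_bad (b a k : ℕ) (m : ℤ) (w : List ℕ) (hw : ∀ k p, ¬ OccursAt w (Bword b a k) p) :
    emp b a k (q ⁻¹' Cyl m w) ≤
      ((2 * m.natAbs + w.length : ℕ) : ℝ≥0∞) * ((Bword b a k).length : ℝ≥0∞)⁻¹ := by
  rw [emp_apply _ _ _ (pre_meas _ _), mul_comm]
  gcongr
  rw [← Finset.card_filter]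
  set h := (Bword b a k).length with hh
  have : (Finset.range h).filter (fun i => yk b a k i ∈ q ⁻¹' Cyl m w) ⊆
      Finset.range m.natAbs ∪ Finset.Ico (h - (m.natAbs + w.length)) h := by
    intro i hi
    rw [Finset.mem_filter, Finset.mem_range] at hi
    by_contra hcon
    simp only [Finset.mem_union, Finset.mem_range, Finset.mem_Ico, not_or] at hcon
    exact hw _ _ (occ_of b a k i m w hi.2 (by omega) (by omega))
  refine (Finset.card_le_card this).trans ((Finset.card_union_le _ _).trans ?_)
  simp
  omega

theorem exist_part {b a : ℕ} (hb : 2 ≤ b) (ha1 : 1 ≤ a) :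
    ∃ μ : Measure (ℤ → ℕ), IsProbabilityMeasure μ ∧ μ {y | InX b a y}ᶜ = 0 ∧
      MeasurePreserving shiftMap μ μ := by
  let P : ℕ → ProbabilityMeasure (ℤ → Bool) := fun k => ⟨emp b a k, emp_prob hb ha1 k⟩
  let U : Ultrafilter ℕ := Ultrafilter.of atTop
  have hU : (U : Filter ℕ) ≤ atTop := Ultrafilter.of_le atTop
  obtain ⟨ν, -, hν⟩ := isCompact_univ.ultrafilter_le_nhds (U.map P) (by simp)
  have hlim : Tendsto P U (𝓝 ν) := hν
  have hcyl : ∀ m w, Tendsto (fun k => emp b a k (q ⁻¹' Cyl m w)) U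
      (𝓝 ((ν : Measure (ℤ → Bool)) (q ⁻¹' Cyl m w))) := by
    intro m w
    exact ProbabilityMeasure.tendsto_measure_of_null_frontier_of_tendsto' hlim
      (by simp [((Cyl_clopen m w).preimage q_cont).frontier_eq])
  have hinv : Tendsto (fun k => ((Bword b a k).length : ℝ≥0∞)⁻¹) U (𝓝 0) := by
    refine Tendsto.mono_left ?_ hU
    apply ENNReal.tendsto_inv_nat_nhds_zero.comp
    exact tendsto_atTop_mono (fun k => (Nat.le_succ k).trans (B_len hb ha1 k)) tendsto_id
  have hq : Measurable q := q_cont.measurable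
  have hp : IsProbabilityMeasure ((ν : Measure (ℤ → Bool)).map q) :=
    Measure.isProbabilityMeasure_map hq.aemeasurable
  have hbad : ∀ m w, (∀ k p, ¬ OccursAt w (Bword b a k) p) →
      (ν : Measure (ℤ → Bool)).map q (Cyl m w) = 0 := by
    intro m w hw
    rw [Measure.map_apply hq (Cyl_meas _ _)]
    have h0 : Tendsto (fun k => ((2 * m.natAbs + w.length : ℕ) : ℝ≥0∞) *
        ((Bword b a k).length : ℝ≥0∞)⁻¹) U (𝓝 0) := by
      simpa using ENNReal.Tendsto.const_mul hinv (Or.inr (ENNReal.natCast_ne_top (2 * m.natAbs + w.length)))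
    exact le_antisymm (le_of_tendsto_of_tendsto' (hcyl m w) h0 (fun k => emp_bad b a k m w hw)) bot_le
  refine ⟨(ν : Measure (ℤ → Bool)).map q, hp, ?_, shift_meas, ?_⟩
  · have hsub : {y | InX b a y}ᶜ ⊆ ⋃ (m : ℤ), ⋃ (w : List ℕ),
        ⋃ (_ : ∀ k p, ¬ OccursAt w (Bword b a k) p), Cyl m w := by
      intro y hy
      simp only [Set.mem_compl_iff, Set.mem_ofPred_eq, InX] at hy
      push Not at hy
      obtain ⟨m, l, h⟩ := hy
      simp only [Set.mem_iUnion]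
      refine ⟨m, blk y m l, h, ?_⟩
      apply (blk_eq_iff _ _ _).1
      simp [blk]
    refine measure_mono_null hsub ?_
    simp only [measure_iUnion_null_iff]
    intro m w hw
    exact hbad m w hw
  · have : IsProbabilityMeasure (((ν : Measure (ℤ → Bool)).map q).map shiftMap) :=
      Measure.isProbabilityMeasure_map shift_meas.aemeasurable
    apply ext_cyl
    intro m w
    rw [Measure.map_apply shift_meas (Cyl_meas _ _), shift_pre,
      Measure.map_apply hq (Cyl_meas _ _), Measure.map_apply hq (Cyl_meas _ _)]
    apply le_antisymm
    · have := (hcyl m w).add hinv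
      rw [add_zero] at this
      exact le_of_tendsto_of_tendsto' (hcyl (m + 1) w) this (fun k => (emp_inv b a k m w).1)
    · have := (hcyl (m + 1) w).add hinv
      rw [add_zero] at this
      exact le_of_tendsto_of_tendsto' (hcyl m w) this (fun k => (emp_inv b a k m w).2)

end UE

/-- the subshift `(X, σ)` is uniquely ergodic: there is exactly one Borel
probability measure carried by `X` and invariant under the shift. -/
theorem uniquely_ergodic (b a : ℕ) (hb : 2 ≤ b) (ha1 : 1 ≤ a) (ha2 : a ≤ b - 1) :
    ∃! μ : Measure (ℤ → ℕ), IsProbabilityMeasure μ ∧ μ {y | InX b a y}ᶜ = 0 ∧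
      MeasurePreserving shiftMap μ μ := by
  obtain ⟨μ, h1, h2, h3⟩ := UE.exist_part hb ha1
  exact ⟨μ, ⟨h1, h2, h3⟩, fun ν ⟨g1, g2, g3⟩ =>
    UE.unique_part hb ha1 ha2 ν μ g1 g2 g3 h1 h2 h3⟩
end

section
/- Let q ≥ 1 with gcd(b, q) = 1. Then the set { k ∈ ℕ : q divides h k } is infinite. -/
open MeasureTheory Filter Topology
open scoped ENNReal

/-- if `gcd (b, q) = 1` then `q ∣ h k` for infinitely many `k`. -/
theorem infinitely_many_divisible (b : ℕ) (hb : 2 ≤ b) (q : ℕ) (hq : 1 ≤ q)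
    (hbq : Nat.Coprime b q) :
    {k : ℕ | q ∣ hseq b k}.Infinite := by
  haveI : NeZero q := ⟨by omega⟩
  let c : (ZMod q)ˣ := ZMod.unitOfCoprime b hbq
  have hc : (c : ZMod q) = (b : ZMod q) := ZMod.coe_unitOfCoprime b hbq
  let T : Equiv.Perm ((ZMod q)ˣ × ZMod q) :=
    { toFun := fun p => (p.1 * c, (p.1 : ZMod q) * p.2 + 1)
      invFun := fun p => (p.1 * c⁻¹, ((p.1 * c⁻¹)⁻¹ : (ZMod q)ˣ) * (p.2 - 1))
      left_inv := fun p => by ext <;> simp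
      right_inv := fun p => by
        ext
        · simp
        · simp only [Units.mul_inv_cancel_left, sub_add_cancel] }
  have hT : ∀ k : ℕ, (T ^ (k + 1)) (1, 0) = (c ^ (k + 1), (hseq b k : ZMod q)) := by
    intro k
    induction k with
    | zero => simp [T, hseq]
    | succ k ih =>
      rw [pow_succ', Equiv.Perm.mul_apply, ih]
      simp [T, hseq, hc, pow_succ]
  have hpos : 0 < orderOf T := orderOf_pos T
  rw [Set.infinite_iff_exists_gt]
  intro n
  have hle : n + 2 ≤ orderOf T * (n + 2) := Nat.le_mul_of_pos_left _ hpos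
  refine ⟨orderOf T * (n + 2) - 1, ?_, by omega⟩
  have h1 := hT (orderOf T * (n + 2) - 1)
  rw [Nat.sub_add_cancel (by omega), pow_mul, pow_orderOf_eq_one, one_pow] at h1
  have h2 := congrArg Prod.snd h1
  exact (ZMod.natCast_eq_zero_iff _ _).1 h2.symm
end

section
/- For every integer q ≥ 1, the set { k ∈ ℕ : h (k+1) ≡ 1 (mod q) } is infinite. -/
open MeasureTheory Filter Topology
open scoped ENNReal

theorem split_aux (b : ℕ) : ∀ q : ℕ, 1 ≤ q →
    ∃ q1 q2 N : ℕ, q = q1 * q2 ∧ q1 ∣ b ^ N ∧ Nat.Coprime b q2 ∧ 1 ≤ q2 := by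
  intro q
  induction q using Nat.strong_induction_on with
  | _ q ih =>
    intro hq
    by_cases hc : Nat.Coprime b q
    · exact ⟨1, q, 0, by simp, by simp, hc, hq⟩
    · have hg0 : 0 < Nat.gcd b q := Nat.gcd_pos_of_pos_right _ hq
      have hg1 : Nat.gcd b q ≠ 1 := hc
      obtain ⟨r, hr⟩ := Nat.gcd_dvd_right b q
      have hr0 : 1 ≤ r := by
        rcases Nat.eq_zero_or_pos r with h | h
        · rw [h] at hr; omega
        · exact h
      have hlt : r < q := by
        have : 2 ≤ Nat.gcd b q := by omega
        nlinarith
      obtain ⟨q1, q2, N, h1, h2, h3, h4⟩ := ih r hlt hr0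
      refine ⟨Nat.gcd b q * q1, q2, N + 1, ?_, ?_, h3, h4⟩
      · rw [mul_assoc, ← h1]; exact hr
      · rw [pow_succ']
        exact Nat.mul_dvd_mul (Nat.gcd_dvd_left b q) h2

/-- The invertible skew map. -/
def skewT (m : ℕ) (v : (ZMod m)ˣ) (p : (ZMod m)ˣ × ZMod m) : (ZMod m)ˣ × ZMod m :=
  (p.1 * v, (p.1 : ZMod m) * p.2 + 1)

theorem skewT_inj (m : ℕ) (v : (ZMod m)ˣ) : Function.Injective (skewT m v) := by
  rintro ⟨u, x⟩ ⟨u', x'⟩ h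
  simp only [skewT, Prod.mk.injEq, mul_left_inj, add_left_inj] at h
  obtain ⟨rfl, h⟩ := h
  rw [Units.mul_right_inj] at h
  rw [h]

theorem skewT_iter (m b : ℕ) (v : (ZMod m)ˣ) (hv : (v : ZMod m) = b) (k : ℕ) :
    (skewT m v)^[k + 1] (1, 0) = (v ^ (k + 1), (hseq b k : ZMod m)) := by
  induction k with
  | zero => simp [skewT, hseq]
  | succ k ih =>
    rw [Function.iterate_succ_apply', ih]
    simp [skewT, hseq, hv, pow_succ]

/-- for every `q ≥ 1`, `h (k+1) ≡ 1 (mod q)` for infinitely many `k`. -/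
theorem infinitely_many_congruent_one (b : ℕ) (hb : 2 ≤ b) (q : ℕ) (hq : 1 ≤ q) :
    {k : ℕ | hseq b (k + 1) ≡ 1 [MOD q]}.Infinite := by
  obtain ⟨q1, q2, N, hqq, h1, hc, h2⟩ := split_aux b q hq
  haveI : NeZero q2 := ⟨by omega⟩
  have hper : ((1, 0) : (ZMod q2)ˣ × ZMod q2) ∈
      Function.periodicPts (skewT q2 (ZMod.unitOfCoprime b hc)) :=
    (skewT_inj q2 _).mem_periodicPts _
  obtain ⟨n, hn, hp⟩ := hper
  rw [Set.infinite_iff_exists_gt]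
  intro M
  obtain ⟨k, hk⟩ : ∃ k, n * (M + N + 2) = k + 1 :=
    ⟨n * (M + N + 2) - 1, by have : 0 < n * (M + N + 2) := by positivity
                             omega⟩
  have hge : M + N + 2 ≤ k + 1 := by rw [← hk]; nlinarith
  refine ⟨k, ?_, by omega⟩
  have h := (hp.mul_const (M + N + 2)).eq
  rw [hk, skewT_iter q2 b _ (ZMod.coe_unitOfCoprime b hc)] at h
  have h0 : (hseq b k : ZMod q2) = 0 := (Prod.mk.inj h).2
  rw [ZMod.natCast_eq_zero_iff] at h0
  have hd : q ∣ b ^ (k + 1) * hseq b k := by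
    rw [hqq]
    exact Nat.mul_dvd_mul (h1.trans (pow_dvd_pow b (by omega))) h0
  change b ^ (k + 1) * hseq b k + 1 ≡ 1 [MOD q]
  have := ((Nat.modEq_zero_iff_dvd).2 hd).add_right 1
  simpa using this
end
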